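/- arXiv:2209.05391 — 3 statements merged into one kernel-verified Lean document; each statement's English description precedes it below -/
import Mathlib

section
/- Let n ≥ 1 and let k, e ∈ {1, …, n}. If C(n,0) + C(n,1) + ⋯ + C(n,e) ≤ 2^(n−k), then there exists a permutation σ of F₂ⁿ lying in the subgroup of permutations of F₂ⁿ generated by all CNOT and Toffoli permutations, such that for every x ∈ F₂ⁿ of Hamming weight at most e, the vector σ(x) is 0 in each of its first k coordinates. -/
/-!
The generated group fixes `0`, and it contains every 3-cycle `(s v s+v)` with `s`, `v` distinct and
nonzero. That is enough: write `V` for the subspace of vectors vanishing in the first `k`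
coordinates and `S` for the ball of radius `e`, so that `|S| ≤ |V|` by hypothesis. As long as some
`s ∈ S` lies outside `V`, counting gives some `v ∈ V` outside `S`, and `v ≠ 0` because `0 ∈ S`. The
3-cycle `s ↦ v ↦ s + v ↦ s` brings `s` into `V`; the only point it takes out of `V` is `v`, which is
not in `S`. Hence the number of points of `S` outside `V` drops, and iterating ends with
`S ⊆ V` (`exists_map_into`).

For the 3-cycles (`exists_threeCycle`), consider the order 3 map `(a, b) ↦ (a + b, a)` on two
coordinates `i`, `j`. It is a product of two CNOTs, and conjugating it by a CNOT inverts it. If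
it is performed only when the coordinates in a set `A` vanish, then multiplying it suitably with a
CNOT performed only when `x l = 0` (a CNOT times a Toffoli) yields the same map with the control
set `A ∪ {l}` (`exists_rot`). With all coordinates other than `i`, `j` as controls, the result is
the 3-cycle on `e_i`, `e_i + e_j`, `e_j`. A product of CNOTs conjugates it to the one required.
-/

/-- A permutation of `Fin n → ZMod 2` is a CNOT permutation with control `i`
and target `j` (for some distinct `i ≠ j`): it replaces coordinate `j` of `x`
with `x j + x i`. -/
def IsCnotPerm {n : ℕ} (π : Equiv.Perm (Fin n → ZMod 2)) : Prop :=
  ∃ i j : Fin n, i ≠ j ∧ ∀ x, π x = Function.update x j (x j + x i)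

/-- A permutation of `Fin n → ZMod 2` is a Toffoli permutation with controls
`i, j` and target `k` (for some pairwise distinct `i, j, k`): it replaces
coordinate `k` of `x` with `x k + x i * x j`. -/
def IsToffoliPerm {n : ℕ} (π : Equiv.Perm (Fin n → ZMod 2)) : Prop :=
  ∃ i j k : Fin n, i ≠ j ∧ i ≠ k ∧ j ≠ k ∧
    ∀ x, π x = Function.update x k (x k + x i * x j)

/-- The group of permutations of `F₂ⁿ` generated by all CNOT and Toffoli permutations. -/
def circuitGroup (n : ℕ) : Subgroup (Equiv.Perm (Fin n → ZMod 2)) :=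
  Subgroup.closure {π : Equiv.Perm (Fin n → ZMod 2) | IsCnotPerm π ∨ IsToffoliPerm π}

theorem zmod_two_add_self_right (a b : ZMod 2) : a + b + b = a := by
  revert a b; decide

theorem exists_cnot {n : ℕ} {i j : Fin n} (h : i ≠ j) :
    ∃ σ ∈ circuitGroup n, ∀ x, σ x = Function.update x j (x j + x i) := by
  have inv : Function.Involutive
      (fun x : Fin n → ZMod 2 => Function.update x j (x j + x i)) := by
    intro x
    simp [h, zmod_two_add_self_right]
  exact ⟨inv.toPerm, Subgroup.subset_closure (Or.inl ⟨i, j, h, fun _ => rfl⟩), fun _ => rfl⟩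

theorem exists_toffoli {n : ℕ} {i j k : Fin n} (hij : i ≠ j) (hik : i ≠ k) (hjk : j ≠ k) :
    ∃ σ ∈ circuitGroup n, ∀ x, σ x = Function.update x k (x k + x i * x j) := by
  have inv : Function.Involutive
      (fun x : Fin n → ZMod 2 => Function.update x k (x k + x i * x j)) := by
    intro x
    simp [hik, hjk, zmod_two_add_self_right]
  exact ⟨inv.toPerm, Subgroup.subset_closure (Or.inr ⟨i, j, k, hij, hik, hjk, fun _ => rfl⟩),
    fun _ => rfl⟩

/-- A CNOT performed only when coordinate `l` is zero, as the product of a CNOT and a Toffoli. -/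
theorem exists_zeroControlled_cnot {n : ℕ} {i j l : Fin n} (hij : i ≠ j) (hli : l ≠ i)
    (hlj : l ≠ j) :
    ∃ σ ∈ circuitGroup n, ∀ x,
      σ x = if x l = 0 then Function.update x j (x j + x i) else x := by
  obtain ⟨σ, hσ, hσx⟩ := exists_cnot hij
  obtain ⟨τ, hτ, hτx⟩ := exists_toffoli hli hlj hij
  refine ⟨σ * τ, mul_mem hσ hτ, fun x => ?_⟩
  rw [Equiv.Perm.mul_apply, hτx, hσx]
  have h2 : ∀ a : ZMod 2, a ≠ 0 → a = 1 := by decide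
  split_ifs with h
  · simp [h, hij]
  · simp [h2 _ h, hij, zmod_two_add_self_right]

/-- The map `(a, b) ↦ (a + b, a)` on coordinates `i`, `j`, performed only on vectors that vanish on
`A`. -/
def rot {n : ℕ} (i j : Fin n) (A : Finset (Fin n)) (x : Fin n → ZMod 2) : Fin n → ZMod 2 :=
  if ∀ l ∈ A, x l = 0 then Function.update (Function.update x i (x i + x j)) j (x i) else x

/-- The vector `x` with coordinates `i`, `j` overwritten by `a`, `b`. -/
def setPair {n : ℕ} (i j : Fin n) (x : Fin n → ZMod 2) (a b : ZMod 2) : Fin n → ZMod 2 :=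
  Function.update (Function.update x i a) j b

theorem setPair_self {n : ℕ} (i j : Fin n) (x : Fin n → ZMod 2) :
    setPair i j x (x i) (x j) = x := by
  simp [setPair]

theorem rot_setPair {n : ℕ} {i j : Fin n} (hij : i ≠ j) {A : Finset (Fin n)} (hi : i ∉ A)
    (hj : j ∉ A) (x : Fin n → ZMod 2) (a b : ZMod 2) :
    rot i j A (setPair i j x a b) =
      if ∀ l ∈ A, x l = 0 then setPair i j x (a + b) a else setPair i j x a b := by
  have hc : (∀ l ∈ A, setPair i j x a b l = 0) ↔ ∀ l ∈ A, x l = 0 := by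
    refine forall₂_congr fun l hl => ?_
    have hli : l ≠ i := fun h => hi (h ▸ hl)
    have hlj : l ≠ j := fun h => hj (h ▸ hl)
    simp [setPair, hli, hlj]
  unfold rot
  by_cases h : ∀ l ∈ A, x l = 0
  · rw [if_pos (hc.2 h), if_pos h]
    ext m
    by_cases hmj : m = j
    · subst hmj; simp [setPair, hij]
    · by_cases hmi : m = i
      · subst hmi; simp [setPair, hij]
      · simp [setPair, hmi, hmj]
  · rw [if_neg (mt hc.1 h), if_neg h]

/-- Controls can be added one at a time, because the group contains both `rot` with few controls and
a CNOT that inverts it under conjugation and is performed only when the new control is on. -/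
theorem exists_rot {n : ℕ} {i j : Fin n} (hij : i ≠ j) (A : Finset (Fin n)) :
    i ∉ A → j ∉ A → ∃ σ ∈ circuitGroup n, ∀ x, σ x = rot i j A x := by
  induction A using Finset.induction_on with
  | empty =>
    intro _ _
    obtain ⟨σ, hσ, hσx⟩ := exists_cnot hij
    obtain ⟨τ, hτ, hτx⟩ := exists_cnot hij.symm
    refine ⟨σ * τ, mul_mem hσ hτ, fun x => ?_⟩
    rw [Equiv.Perm.mul_apply, hτx, hσx]
    have h2 : ∀ a b : ZMod 2, b + (a + b) = a := by decide
    simp [rot, hij.symm, h2]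
  | insert l A hl ih =>
    intro hi hj
    have hi' := hi
    have hj' := hj
    simp only [Finset.mem_insert, not_or] at hi' hj'
    obtain ⟨σ, hσ, hσx⟩ := ih hi'.2 hj'.2
    obtain ⟨τ, hτ, hτx⟩ := exists_zeroControlled_cnot hij (Ne.symm hi'.1) (Ne.symm hj'.1)
    have hli := Ne.symm hi'.1
    have hlj := Ne.symm hj'.1
    have hτp : ∀ x a b, τ (setPair i j x a b) =
        if x l = 0 then setPair i j x a (b + a) else setPair i j x a b := by
      intro x a b
      have hc : setPair i j x a b l = x l := by simp [setPair, hli, hlj]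
      rw [hτx, hc]
      simp [setPair, hij]
    -- When both controls are on, `τ σ τ = σ⁻¹`, and the product is `σ⁻¹ σ² = σ`. With one control
    -- off, it is `σ³ = 1` or `τ² = 1`.
    refine ⟨τ * σ * τ * σ * σ,
      mul_mem (mul_mem (mul_mem (mul_mem hτ hσ) hτ) hσ) hσ, fun x => ?_⟩
    have e1 : ∀ a b : ZMod 2, a + b + a = b := by decide
    have e3 : ∀ a b : ZMod 2, b + (a + b) = a := by decide
    rw [← setPair_self i j x]
    generalize x i = a
    generalize x j = b
    simp only [Equiv.Perm.mul_apply, hσx]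
    by_cases hA : ∀ m ∈ A, x m = 0
    · have hr : ∀ a b, rot i j A (setPair i j x a b) = setPair i j x (a + b) a := fun a b => by
        rw [rot_setPair hij hi'.2 hj'.2, if_pos hA]
      by_cases hx : x l = 0
      · rw [rot_setPair hij hi hj, if_pos (by simpa [hx] using hA)]
        simp [hr, hτp, hx, e1, e3]
      · rw [rot_setPair hij hi hj, if_neg fun h => hx (h l (Finset.mem_insert_self l A))]
        simp [hr, hτp, hx, e1, e3]
    · have hr : ∀ a b, rot i j A (setPair i j x a b) = setPair i j x a b := fun a b => by
        rw [rot_setPair hij hi'.2 hj'.2, if_neg hA]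
      rw [rot_setPair hij hi hj,
        if_neg fun h => hA fun m hm => h m (Finset.mem_insert_of_mem hm)]
      by_cases hx : x l = 0 <;> simp [hr, hτp, hx, zmod_two_add_self_right]

/-- The transvection `x ↦ x + xᵢ u`, for `u` with `uᵢ = 0`, belongs to the group: it is the product
of the CNOTs with control `i` and target in the support of `u`. -/
theorem exists_transvection {n : ℕ} (i : Fin n) (u : Fin n → ZMod 2) (hu : u i = 0) :
    ∃ σ ∈ circuitGroup n, ∀ x, σ x = x + x i • u := by
  have key : ∀ A : Finset (Fin n), i ∉ A →
      ∃ σ ∈ circuitGroup n, ∀ x, σ x = fun m => if m ∈ A then x m + x i else x m := by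
    intro A
    induction A using Finset.induction_on with
    | empty => exact fun _ => ⟨1, one_mem _, fun x => by simp⟩
    | insert l A hl ih =>
      intro hi
      simp only [Finset.mem_insert, not_or] at hi
      obtain ⟨σ, hσ, hσx⟩ := ih hi.2
      obtain ⟨τ, hτ, hτx⟩ := exists_cnot hi.1
      refine ⟨τ * σ, mul_mem hτ hσ, fun x => ?_⟩
      rw [Equiv.Perm.mul_apply, hτx, hσx]
      ext m
      by_cases hm : m = l
      · subst hm; simp [hl, hi.2]
      · simp [hm]
  obtain ⟨σ, hσ, hσx⟩ := key (Finset.univ.filter fun m => u m ≠ 0) (by simp [hu])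
  refine ⟨σ, hσ, fun x => ?_⟩
  rw [hσx]
  ext m
  have h2 : ∀ a : ZMod 2, a ≠ 0 → a = 1 := by decide
  by_cases hm : u m = 0
  · simp [hm]
  · simp [h2 _ hm]

/-- Some element of the group, a product of two transvections and hence linear, carries the basis
vectors `e_i`, `e_j` to `w`, `v`. -/
theorem exists_frame {n : ℕ} {i j : Fin n} (hij : i ≠ j) (w v : Fin n → ZMod 2)
    (hwi : w i = 1) (hvi : v i = 0) (hvj : v j = 1) :
    ∃ σ ∈ circuitGroup n, σ (Pi.single i 1) = w ∧ σ (Pi.single j 1) = v ∧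
      σ (Pi.single i 1 + Pi.single j 1) = w + v := by
  have self : ∀ a : ZMod 2, a + a = 0 := by decide
  obtain ⟨σ, hσ, hσx⟩ := exists_transvection j (v + Pi.single j 1) (by simp [hvj, self])
  -- `σ` is an involution sending `e_j` to `v`; next, a transvection sending `e_i` to `σ w` while
  -- fixing `e_j`.
  obtain ⟨τ, hτ, hτx⟩ := exists_transvection i (σ w + Pi.single i 1)
    (by simp [hσx, hwi, hvi, hij, self])
  have hadd : ∀ x y, (σ * τ) (x + y) = (σ * τ) x + (σ * τ) y := by
    intro x y
    simp only [Equiv.Perm.mul_apply, hσx, hτx]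
    simp only [Pi.add_apply, Pi.smul_apply, add_smul]
    abel
  have h1 : (σ * τ) (Pi.single i 1) = w := by
    have : τ (Pi.single i 1) = σ w := by
      rw [hτx]; ext m
      have h2 : ∀ a b : ZMod 2, a + (b + a) = b := by decide
      simp [h2]
    rw [Equiv.Perm.mul_apply, this, hσx, hσx]
    ext m
    simp [hvj, self, zmod_two_add_self_right]
  have h2 : (σ * τ) (Pi.single j 1) = v := by
    have : τ (Pi.single j 1) = Pi.single j 1 := by
      rw [hτx]; simp [hij]
    rw [Equiv.Perm.mul_apply, this, hσx]
    ext m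
    have h2 : ∀ a b : ZMod 2, a + (b + a) = b := by decide
    simp [h2]
  exact ⟨σ * τ, mul_mem hσ hτ, h1, h2, by rw [hadd, h1, h2]⟩

/-- The 3-cycle `s ↦ v ↦ s + v ↦ s` belongs to the group. The coordinates `i`, `j` witness that
`s` and `v` are linearly independent. -/
theorem exists_threeCycle {n : ℕ} {i j : Fin n} (s v : Fin n → ZMod 2)
    (hsi : s i = 1) (hvi : v i = 0) (hvj : v j = 1) :
    ∃ τ ∈ circuitGroup n, τ s = v ∧ τ v = s + v ∧ τ (s + v) = s ∧
      ∀ x, x ≠ s → x ≠ v → x ≠ s + v → τ x = x := by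
  have hij : i ≠ j := by rintro rfl; simp [hvi] at hvj
  have h01 : ∀ a : ZMod 2, a = 0 ∨ a = 1 := by decide
  have hsv : s + v + v = s := funext fun m => zmod_two_add_self_right (s m) (v m)
  obtain ⟨L, hL, h1, h2, h3⟩ := exists_frame hij (s + v) v (by simp [hsi, hvi]) hvi hvj
  rw [hsv] at h3
  obtain ⟨ρ, hρ, hρx⟩ := exists_rot hij (Finset.univ \ {i, j}) (by simp) (by simp)
  have hsupp : ∀ m, m ≠ i → m ≠ j → ∀ a b : ZMod 2,
      (Pi.single i a + Pi.single j b : Fin n → ZMod 2) m = 0 := by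
    intro m hmi hmj a b; simp [hmi, hmj]
  -- `ρ` on the plane spanned by `e_i`, `e_j`
  have hplane : ∀ a b : ZMod 2,
      ρ (Pi.single i a + Pi.single j b) = Pi.single i (a + b) + Pi.single j a := by
    intro a b
    have hc : ∀ l ∈ Finset.univ \ {i, j},
        (Pi.single i a + Pi.single j b : Fin n → ZMod 2) l = 0 := by
      intro l hl
      simp only [Finset.mem_sdiff, Finset.mem_univ, true_and, Finset.mem_insert,
        Finset.mem_singleton, not_or] at hl
      exact hsupp l hl.1 hl.2 a b
    rw [hρx, rot, if_pos hc]
    ext m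
    by_cases hmj : m = j
    · subst hmj; simp [hij, hij.symm]
    · by_cases hmi : m = i
      · subst hmi; simp [hij, hij.symm]
      · simp [hmi, hmj]
  have hfix : ∀ y, ρ y ≠ y → y = Pi.single i (y i) + Pi.single j (y j) := by
    intro y hy
    rw [hρx, rot] at hy
    split_ifs at hy with hc
    · ext m
      by_cases hmj : m = j
      · subst hmj; simp [hij.symm]
      · by_cases hmi : m = i
        · subst hmi; simp [hij]
        · rw [hsupp m hmi hmj]; exact hc m (by simp [hmi, hmj])
    · exact absurd rfl hy
  have r10 : ρ (Pi.single i 1) = Pi.single i 1 + Pi.single j 1 := by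
    simpa using hplane 1 0
  have r01 : ρ (Pi.single j 1) = Pi.single i 1 := by
    simpa using hplane 0 1
  have r11 : ρ (Pi.single i 1 + Pi.single j 1) = Pi.single j 1 := by
    have := hplane 1 1
    rwa [show (1 + 1 : ZMod 2) = 0 from by decide, Pi.single_zero, zero_add] at this
  have r00 : ρ 0 = 0 := by simpa using hplane 0 0
  refine ⟨L * ρ * L⁻¹, mul_mem (mul_mem hL hρ) (inv_mem hL), ?_, ?_, ?_, ?_⟩
  · rw [← h3]; simp [r11, h2]
  · rw [← h1]; conv_lhs => rw [← h2]
    simp [r01]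
  · rw [← h1]; simp [r10, h3]
  · intro x hs hv hw
    obtain ⟨y, rfl⟩ := L.surjective x
    suffices ρ y = y by simp [this]
    by_contra hy
    have hyy := hfix y hy
    rcases h01 (y i) with hi | hi <;> rcases h01 (y j) with hj | hj <;>
      simp only [hi, hj, Pi.single_zero, zero_add, add_zero] at hyy
    · exact hy (by rw [hyy, r00])
    · exact hv (by rw [hyy, h2])
    · exact hw (by rw [hyy, h1])
    · exact hs (by rw [hyy, h3])

/-- A set containing `0` and no larger than the coordinate subspace of vectors vanishing in the
first `k` coordinates can be moved into that subspace. The induction is on the number `m` of its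
points outside the subspace. -/
theorem exists_map_into {n : ℕ} (k : ℕ) (m : ℕ) : ∀ S : Finset (Fin n → ZMod 2), 0 ∈ S →
    S.card ≤ (Finset.univ.filter fun x : Fin n → ZMod 2 => ∀ i : Fin n, (i : ℕ) < k → x i = 0).card →
    (S.filter fun x => ¬ ∀ i : Fin n, (i : ℕ) < k → x i = 0).card = m →
    ∃ σ ∈ circuitGroup n, ∀ x ∈ S, ∀ i : Fin n, (i : ℕ) < k → σ x i = 0 := by
  induction m using Nat.strong_induction_on with
  | _ m ih =>
  intro S h0 hcard hm
  set V := Finset.univ.filter fun x : Fin n → ZMod 2 => ∀ i : Fin n, (i : ℕ) < k → x i = 0 with hV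
  by_cases hall : ∀ x ∈ S, ∀ i : Fin n, (i : ℕ) < k → x i = 0
  · exact ⟨1, one_mem _, hall⟩
  have h2 : ∀ a : ZMod 2, a ≠ 0 → a = 1 := by decide
  push Not at hall
  obtain ⟨s, hsS, i, hik, hsi⟩ := hall
  obtain ⟨v, hvV, hvS⟩ : ∃ v ∈ V, v ∉ S := by
    by_contra! hsub
    have hVS : V = S := Finset.eq_of_subset_of_card_le hsub hcard
    rw [← hVS, hV, Finset.mem_filter] at hsS
    exact hsi (hsS.2 i hik)
  have hv : ∀ i : Fin n, (i : ℕ) < k → v i = 0 := (Finset.mem_filter.1 hvV).2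
  have hv0 : v ≠ 0 := fun h => hvS (h ▸ h0)
  obtain ⟨j, hvj⟩ := Function.ne_iff.1 hv0
  have hvi := hv i hik
  obtain ⟨τ, hτ, t1, t2, t3, t4⟩ := exists_threeCycle s v (h2 _ hsi) hvi (h2 _ hvj)
  have hs0 : s ≠ 0 := by rintro rfl; exact hsi rfl
  have τ0 : τ 0 = 0 := by
    refine t4 0 hs0.symm hv0.symm fun h => hsi ?_
    have := congrFun h i
    simpa [hvi] using this.symm
  have hlt : ((S.image τ).filter fun x => ¬ ∀ i : Fin n, (i : ℕ) < k → x i = 0).card < m := by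
    rw [Finset.filter_image, Finset.card_image_of_injective _ τ.injective, ← hm]
    refine Finset.card_lt_card (Finset.ssubset_iff_of_subset ?_ |>.2 ⟨s, ?_, ?_⟩)
    · intro x hx
      rw [Finset.mem_filter] at hx ⊢
      refine ⟨hx.1, fun hxV => hx.2 ?_⟩
      -- a point of `S ∩ V` is none of `s`, `v`, `s + v`, so it is fixed
      rw [t4 x]
      · exact hxV
      · rintro rfl; exact hsi (hxV i hik)
      · rintro rfl; exact hvS hx.1
      · rintro rfl
        exact hsi (by simpa [hvi] using hxV i hik)
    · exact Finset.mem_filter.2 ⟨hsS, fun h => hsi (h i hik)⟩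
    · simp only [Finset.mem_filter, t1, not_and, not_not]
      exact fun _ => hv
  obtain ⟨σ, hσ, hσx⟩ := ih _ hlt (S.image τ) (Finset.mem_image.2 ⟨0, h0, τ0⟩)
    (by rwa [Finset.card_image_of_injective _ τ.injective]) rfl
  exact ⟨σ * τ, mul_mem hσ hτ, fun x hx => hσx _ (Finset.mem_image_of_mem _ hx)⟩

theorem card_hammingBall_le (n e : ℕ) :
    (Finset.univ.filter fun x : Fin n → ZMod 2 => hammingNorm x ≤ e).card ≤
      ∑ i ∈ Finset.range (e + 1), n.choose i := by
  have h01 : ∀ a b : ZMod 2, (a ≠ 0 ↔ b ≠ 0) → a = b := by decide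
  calc _ ≤ ((Finset.range (e + 1)).biUnion
          fun i => Finset.powersetCard i (Finset.univ : Finset (Fin n))).card := by
        -- a vector over `F₂` is determined by its support
        refine Finset.card_le_card_of_injOn
          (fun x => Finset.univ.filter fun m => x m ≠ 0) ?_ ?_
        · intro x hx
          simp only [Finset.coe_filter, Finset.mem_univ, true_and, Set.mem_ofPred_eq] at hx
          simp only [Finset.coe_biUnion, Set.mem_iUnion, Finset.mem_coe, Finset.mem_range,
            Finset.mem_powersetCard, Finset.subset_univ, true_and]
          exact ⟨_, Nat.lt_succ_of_le hx, rfl⟩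
        · intro x _ y _ hxy
          ext m : 1
          have := Finset.ext_iff.1 hxy m
          simp only [Finset.mem_filter, Finset.mem_univ, true_and] at this
          exact h01 _ _ this
    _ ≤ ∑ i ∈ Finset.range (e + 1),
          (Finset.powersetCard i (Finset.univ : Finset (Fin n))).card := Finset.card_biUnion_le
    _ = _ := by simp

theorem card_vanishing (n k : ℕ) (hkn : k ≤ n) :
    (Finset.univ.filter
      fun x : Fin n → ZMod 2 => ∀ i : Fin n, (i : ℕ) < k → x i = 0).card = 2 ^ (n - k) := by
  have h : (Finset.univ.filter
      fun x : Fin n → ZMod 2 => ∀ i : Fin n, (i : ℕ) < k → x i = 0) =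
      Fintype.piFinset fun i : Fin n => if (i : ℕ) < k then {0} else Finset.univ := by
    ext x
    simp only [Finset.mem_filter, Finset.mem_univ, true_and, Fintype.mem_piFinset]
    refine forall_congr' fun i => ?_
    split_ifs with hi <;> simp [hi]
  rw [h, Fintype.card_piFinset, Fin.prod_univ_eq_prod_range
    (fun i => (if i < k then ({0} : Finset (ZMod 2)) else Finset.univ).card) n,
    ← Finset.prod_range_mul_prod_Ico _ hkn,
    Finset.prod_eq_one (fun i hi => by simp [Finset.mem_range.1 hi]), one_mul,
    Finset.prod_congr rfl (g := fun _ => 2)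
      (fun i hi => by simp [not_lt.2 (Finset.mem_Ico.1 hi).1, ZMod.card])]
  simp

/-- If `C(n,0) + ⋯ + C(n,e) ≤ 2^(n-k)` then there is an `(n,k,e)` purification
circuit: a permutation in the group generated by CNOT and Toffoli permutations
mapping every vector of Hamming weight at most `e` to a vector vanishing in its
first `k` coordinates. -/
theorem exists_purification_circuit (n k e : ℕ) (hn : 1 ≤ n)
    (hk1 : 1 ≤ k) (hkn : k ≤ n) (he1 : 1 ≤ e) (hen : e ≤ n)
    (hsize : ∑ i ∈ Finset.range (e + 1), n.choose i ≤ 2 ^ (n - k)) :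
    ∃ σ ∈ Subgroup.closure
        {π : Equiv.Perm (Fin n → ZMod 2) | IsCnotPerm π ∨ IsToffoliPerm π},
      ∀ x : Fin n → ZMod 2, hammingNorm x ≤ e →
        ∀ i : Fin n, (i : ℕ) < k → σ x i = 0 := by
  obtain ⟨σ, hσ, hx⟩ := exists_map_into k _
    (Finset.univ.filter fun x : Fin n → ZMod 2 => hammingNorm x ≤ e) (by simp)
    ((card_hammingBall_le n e).trans (hsize.trans (card_vanishing n k hkn).ge)) rfl
  exact ⟨σ, hσ, fun x h => hx x (by simpa using h)⟩
end

section
/- For n ≥ 4, every element of the subgroup Gₙ of permutations of F₂ⁿ generated by all CNOT and Toffoli permutations fixes the zero vector, and the group of permutations of F₂ⁿ ∖ {0} obtained by restricting elements of Gₙ to the nonzero vectors is exactly the alternating group on F₂ⁿ ∖ {0}. -/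
/-- The group `Gₙ` generated by all CNOT and Toffoli permutations on `n` qubits. -/
def gateGroup (n : ℕ) : Subgroup (Equiv.Perm (Fin n → ZMod 2)) :=
  Subgroup.closure {π | IsCnotPerm π ∨ IsToffoliPerm π}

open Equiv Equiv.Perm

/-! ### Multiply controlled NOT gates -/

section Gates

variable {n : ℕ}

theorem zmod_two_cases (a : ZMod 2) : a = 0 ∨ a = 1 := by
  revert a; decide

/-- The multiply controlled NOT gate with control set `S \ {k}` and target `k`. Erasing `k` makes
the map an involution for all `S`; it is only used when `k ∉ S`. -/
def mcx (S : Finset (Fin n)) (k : Fin n) : Perm (Fin n → ZMod 2) :=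
  Function.Involutive.toPerm
    (fun x => Function.update x k (x k + ∏ i ∈ S.erase k, x i)) (fun x => by
      simp [Finset.prod_update_of_notMem, add_assoc, CharTwo.add_self_eq_zero])

theorem mcx_apply {S : Finset (Fin n)} {k : Fin n} (h : k ∉ S) (x : Fin n → ZMod 2) :
    mcx S k x = Function.update x k (x k + ∏ i ∈ S, x i) := by
  simp [mcx, Finset.erase_eq_of_notMem h]

theorem mcx_mcx (S : Finset (Fin n)) (k : Fin n) (x : Fin n → ZMod 2) :
    mcx S k (mcx S k x) = x :=
  (mcx S k).left_inv x

theorem mcx_inv (S : Finset (Fin n)) (k : Fin n) : (mcx S k)⁻¹ = mcx S k := rfl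

theorem mcx_zero {S : Finset (Fin n)} {k : Fin n} (h : k ∉ S) (hS : S.Nonempty) :
    mcx S k 0 = 0 := by
  simp [mcx_apply h, hS.ne_empty]

theorem mcx_comm {A B : Finset (Fin n)} {m k : Fin n} (hAB : Disjoint A B) (hmA : m ∉ A)
    (hmB : m ∉ B) (hkA : k ∉ A) (hkB : k ∉ B) (hmk : m ≠ k) :
    mcx A m * mcx (insert m B) k * (mcx A m)⁻¹ * (mcx (insert m B) k)⁻¹ = mcx (A ∪ B) k := by
  have hk : k ∉ insert m B := by simp [hkB, hmk.symm]
  have hk' : k ∉ A ∪ B := by simp [hkA, hkB]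
  refine Equiv.ext fun x => ?_
  simp only [mcx_inv, Perm.mul_apply, mcx_apply hk, mcx_apply hk', mcx_apply hmA,
    Finset.prod_insert hmB, Finset.prod_union hAB, Finset.prod_update_of_notMem hmA,
    Finset.prod_update_of_notMem hmB, Finset.prod_update_of_notMem hkA,
    Finset.prod_update_of_notMem hkB]
  funext j
  by_cases hjk : j = k
  · subst hjk
    simp only [Function.update_self, Function.update_of_ne hmk, Function.update_of_ne hmk.symm]
    linear_combination (x m * ∏ i ∈ B, x i) * (CharTwo.two_eq_zero : (2 : ZMod 2) = 0)
  · by_cases hjm : j = m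
    · subst hjm
      simp [hmk, add_assoc, CharTwo.add_self_eq_zero]
    · simp [hjk, hjm]

/-- A gate with an unused coordinate `m` is a commutator, hence even. -/
theorem sign_mcx {S : Finset (Fin n)} {k m : Fin n} (hk : k ∉ S) (hm : m ∉ S) (hmk : m ≠ k) :
    sign (mcx S k) = 1 := by
  have h := mcx_comm (A := S) (B := ∅) (by simp) hm (by simp) hk (by simp) hmk
  rw [Finset.union_empty] at h
  rw [← h, Perm.sign_mul, Perm.sign_mul, Perm.sign_mul, sign_inv, sign_inv, mul_right_comm (sign (mcx S m)),
    Int.units_mul_self, one_mul, Int.units_mul_self]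

theorem cnot_mem {i k : Fin n} (h : i ≠ k) : mcx {i} k ∈ gateGroup n :=
  Subgroup.subset_closure (Or.inl ⟨i, k, h, fun x => by simp [mcx_apply, h.symm]⟩)

theorem toffoli_mem {i j k : Fin n} (hij : i ≠ j) (hik : i ≠ k) (hjk : j ≠ k) :
    mcx {j, i} k ∈ gateGroup n :=
  Subgroup.subset_closure (Or.inr ⟨j, i, k, hij.symm, hjk, hik, fun x => by
    simp [mcx_apply, hik.symm, hjk.symm, hij.symm]⟩)

theorem mcx_mem {S : Finset (Fin n)} (hS : S.Nonempty) :
    ∀ {k m : Fin n}, k ∉ S → m ∉ S → m ≠ k → mcx S k ∈ gateGroup n := by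
  induction hS using Finset.Nonempty.cons_induction with
  | singleton a =>
    intro k m hk _ _
    exact cnot_mem (by simpa [eq_comm] using hk)
  | cons a S ha _ ih =>
    intro k m hk hm hmk
    simp only [Finset.mem_cons, not_or] at hk hm
    have h := mcx_comm (A := S) (B := {a}) (by simpa using ha) hm.2 (by simpa using hm.1) hk.2
      (by simpa using hk.1) hmk
    have e : S ∪ {a} = Finset.cons a S ha := by
      ext; simp
    rw [← e, ← h]
    have h1 := ih hm.2 hk.2 hmk.symm
    have h2 : mcx (insert m {a}) k ∈ gateGroup n := toffoli_mem (Ne.symm hm.1) (Ne.symm hk.1) hmk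
    exact mul_mem (mul_mem (mul_mem h1 h2) (inv_mem h1)) (inv_mem h2)

/-- Every generator is a gate with one or two controls. -/
theorem exists_eq_mcx {π : Perm (Fin n → ZMod 2)} (h : IsCnotPerm π ∨ IsToffoliPerm π) :
    ∃ S k, S.Nonempty ∧ S.card ≤ 2 ∧ k ∉ S ∧ π = mcx S k := by
  rcases h with ⟨i, j, hij, h⟩ | ⟨i, j, k, hij, hik, hjk, h⟩
  · refine ⟨{i}, j, by simp, by simp, by simpa using hij.symm, Equiv.ext fun x => ?_⟩
    rw [h, mcx_apply (by simpa using hij.symm), Finset.prod_singleton]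
  · have hk : k ∉ ({i, j} : Finset (Fin n)) := by simp [hik.symm, hjk.symm]
    refine ⟨{i, j}, k, by simp, Finset.card_le_two, hk, Equiv.ext fun x => ?_⟩
    rw [h, mcx_apply hk, Finset.prod_pair hij]

theorem gateGroup_fix_zero {σ : Perm (Fin n → ZMod 2)} (hσ : σ ∈ gateGroup n) : σ 0 = 0 := by
  have : gateGroup n ≤ MulAction.stabilizer (Perm (Fin n → ZMod 2)) (0 : Fin n → ZMod 2) := by
    refine (Subgroup.closure_le _).2 fun π hπ => ?_
    obtain ⟨S, k, hS, -, hk, rfl⟩ := exists_eq_mcx hπ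
    exact mcx_zero hk hS
  exact this hσ

theorem gateGroup_sign (hn : 4 ≤ n) {σ : Perm (Fin n → ZMod 2)} (hσ : σ ∈ gateGroup n) :
    sign σ = 1 := by
  have : gateGroup n ≤ alternatingGroup (Fin n → ZMod 2) := by
    refine (Subgroup.closure_le _).2 fun π hπ => ?_
    obtain ⟨S, k, -, hS, hk, rfl⟩ := exists_eq_mcx hπ
    obtain ⟨m, hm⟩ : ∃ m, m ∉ insert k S := by
      by_contra! hall
      have h1 := Finset.card_insert_le k S
      rw [Finset.eq_univ_iff_forall.2 hall, Finset.card_univ, Fintype.card_fin] at h1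
      omega
    simp only [Finset.mem_insert, not_or] at hm
    exact mem_alternatingGroup.2 (sign_mcx hk hm.2 hm.1)
  exact mem_alternatingGroup.1 (this hσ)

end Gates

/-! ### Two-transitivity on the nonzero vectors -/

section Transitivity

variable {n : ℕ}

theorem cnot_apply {i k : Fin n} (h : i ≠ k) (x : Fin n → ZMod 2) :
    mcx {i} k x = Function.update x k (x k + x i) := by
  rw [mcx_apply (by simpa using h.symm), Finset.prod_singleton]

/-- A nonzero coordinate `t` of `y` can be used to clear any set of other coordinates, without
moving the vectors whose coordinate `t` vanishes. -/
theorem exists_clear {y : Fin n → ZMod 2} {t : Fin n} (hy : y t = 1) (s : Finset (Fin n)) :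
    t ∉ s → ∃ g ∈ gateGroup n, (∀ j, g y j = if j ∈ s then 0 else y j) ∧
      ∀ x, x t = 0 → g x = x := by
  induction s using Finset.induction_on with
  | empty => exact fun _ => ⟨1, one_mem _, by simp, by simp⟩
  | insert a s ha ih =>
    intro ht
    simp only [Finset.mem_insert, not_or] at ht
    obtain ⟨g, hg, hgy, hfix⟩ := ih ht.2
    rcases zmod_two_cases (y a) with h0 | h1
    · refine ⟨g, hg, fun j => ?_, hfix⟩
      rw [hgy]
      by_cases hja : j = a
      · subst hja; simp [h0]
      · simp [hja]
    · refine ⟨mcx {t} a * g, mul_mem (cnot_mem ht.1) hg, fun j => ?_, fun x hx => ?_⟩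
      · rw [Perm.mul_apply, cnot_apply ht.1]
        by_cases hja : j = a
        · subst hja
          simp [hgy, ha, ht.2, h1, hy, CharTwo.add_self_eq_zero]
        · simp [hja, hgy]
      · rw [Perm.mul_apply, hfix x hx, cnot_apply ht.1]
        simp [hx]

/-- A vector with nonzero coordinate `i` can be moved to any basis vector `e t`, without moving
the vectors whose coordinates `i` and `t` vanish. -/
theorem exists_map_single {y : Fin n → ZMod 2} {i : Fin n} (hy : y i = 1) (t : Fin n) :
    ∃ g ∈ gateGroup n, g y = Pi.single t 1 ∧ ∀ x, x i = 0 → x t = 0 → g x = x := by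
  -- It suffices to make the coordinate `t` nonzero first.
  suffices h : ∃ g ∈ gateGroup n, g y t = 1 ∧ ∀ x, x i = 0 → x t = 0 → g x = x by
    obtain ⟨g, hg, hgy, hfix⟩ := h
    obtain ⟨g', hg', hgy', hfix'⟩ := exists_clear hgy (Finset.univ.erase t) (by simp)
    refine ⟨g' * g, mul_mem hg' hg, ?_, fun x hi ht => ?_⟩
    · funext j
      rw [Perm.mul_apply, hgy']
      by_cases hj : j = t
      · subst hj; simp [hgy]
      · simp [hj]
    · rw [Perm.mul_apply, hfix x hi ht, hfix' x ht]
  rcases zmod_two_cases (y t) with h0 | h1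
  · have hit : i ≠ t := by
      rintro rfl
      simp [hy] at h0
    refine ⟨mcx {i} t, cnot_mem hit, ?_, fun x hi _ => ?_⟩
    · simp [cnot_apply hit, h0, hy]
    · simp [cnot_apply hit, hi]
  · exact ⟨1, one_mem _, by simpa using h1, by simp⟩

/-- Any two distinct nonzero vectors can be mapped to two given distinct basis vectors; since
`Gₙ` is a group, this is 2-transitivity on the nonzero vectors. -/
theorem exists_map_pair {s t : Fin n} (hst : s ≠ t) {a b : Fin n → ZMod 2} (ha : a ≠ 0)
    (hb : b ≠ 0) (hab : a ≠ b) :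
    ∃ g ∈ gateGroup n, g a = Pi.single s 1 ∧ g b = Pi.single t 1 := by
  obtain ⟨i, hi⟩ := Function.ne_iff.1 ha
  obtain ⟨g, hg, hga, -⟩ := exists_map_single ((zmod_two_cases (a i)).resolve_left hi) s
  -- The image of `b` is neither `0` nor `e s`, so it has a nonzero coordinate besides `s`.
  obtain ⟨j, hjs, hj⟩ : ∃ j, j ≠ s ∧ g b j ≠ 0 := by
    by_contra! hall
    rcases zmod_two_cases (g b s) with h0 | h1
    · refine hb (g.injective ?_)
      rw [gateGroup_fix_zero hg]
      funext j
      by_cases hj : j = s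
      · subst hj; exact h0
      · exact hall j hj
    · refine hab (g.injective ?_)
      rw [hga]
      funext j
      by_cases hj : j = s
      · subst hj; simp [h1]
      · simp [hj, hall j hj]
  obtain ⟨g', hg', hgb', hfix'⟩ :=
    exists_map_single ((zmod_two_cases (g b j)).resolve_left hj) t
  refine ⟨g' * g, mul_mem hg' hg, ?_, by rw [Perm.mul_apply, hgb']⟩
  rw [Perm.mul_apply, hga]
  exact hfix' _ (by simp [hjs]) (by simp [hst.symm])

end Transitivity

/-! ### A 3-cycle in the gate group -/

section ThreeCycle

/-- Two involutions whose supports meet in a single point `p` have a 3-cycle as commutator. -/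
theorem comm_eq_swap_mul_swap {α : Type*} [DecidableEq α] {f g : Perm α} {p : α}
    (hf : ∀ x, f (f x) = x) (hg : ∀ x, g (g x) = x) (hfp : f p ≠ p) (hgp : g p ≠ p)
    (h : ∀ x, f x = x ∨ g x = x ∨ x = p) :
    f * g * f * g = swap p (g p) * swap p (f p) := by
  have hgf : g (f p) = f p := by
    rcases h (f p) with h1 | h1 | h1
    · rw [hf] at h1; exact absurd h1.symm hfp
    · exact h1
    · exact absurd h1 hfp
  have hfg : f (g p) = g p := by
    rcases h (g p) with h1 | h1 | h1
    · exact h1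
    · rw [hg] at h1; exact absurd h1.symm hgp
    · exact absurd h1 hgp
  refine Equiv.ext fun x => ?_
  simp only [Perm.mul_apply, swap_apply_def]
  grind

theorem exists_threeCycle_s2 {n : ℕ} (hn : 4 ≤ n) : ∃ σ ∈ gateGroup n, IsThreeCycle σ := by
  obtain ⟨a, b, k, m, hab, hak, ham, hbk, hbm, hkm⟩ :
      ∃ a b k m : Fin n, a ≠ b ∧ a ≠ k ∧ a ≠ m ∧ b ≠ k ∧ b ≠ m ∧ k ≠ m :=
    ⟨⟨0, by omega⟩, ⟨1, by omega⟩, ⟨2, by omega⟩, ⟨3, by omega⟩, by simp⟩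
  have hk : k ∉ ({k, m}ᶜ : Finset (Fin n)) := by simp
  have hm : m ∉ ({k, m}ᶜ : Finset (Fin n)) := by simp
  have ha : a ∉ ({a, b}ᶜ : Finset (Fin n)) := by simp
  have hb : b ∉ ({a, b}ᶜ : Finset (Fin n)) := by simp
  have hf : mcx {k, m}ᶜ k ∈ gateGroup n :=
    mcx_mem ⟨a, by simp [hak, ham]⟩ hk hm hkm.symm
  have hg : mcx {a, b}ᶜ a ∈ gateGroup n :=
    mcx_mem ⟨k, by simp [hak.symm, hbk.symm]⟩ ha hb hab.symm
  -- A gate can only move vectors whose control coordinates are all `1`.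
  have key : ∀ {S : Finset (Fin n)} {k : Fin n} {x : Fin n → ZMod 2}, k ∉ S →
      mcx S k x ≠ x → ∀ i ∈ S, x i = 1 := by
    intro S k x hk hx i hi
    refine (zmod_two_cases (x i)).resolve_left fun h0 => hx ?_
    rw [mcx_apply hk, Finset.prod_eq_zero hi h0, add_zero, Function.update_eq_self]
  have hfp : mcx {k, m}ᶜ k 1 = Function.update (1 : Fin n → ZMod 2) k 0 := by
    rw [mcx_apply hk]; simp [CharTwo.add_self_eq_zero]
  have hgp : mcx {a, b}ᶜ a 1 = Function.update (1 : Fin n → ZMod 2) a 0 := by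
    rw [mcx_apply ha]; simp [CharTwo.add_self_eq_zero]
  have hfp' : mcx {k, m}ᶜ k 1 ≠ 1 := fun h => by
    rw [hfp] at h; simpa using congrFun h k
  have hgp' : mcx {a, b}ᶜ a 1 ≠ 1 := fun h => by
    rw [hgp] at h; simpa using congrFun h a
  have hne : mcx {a, b}ᶜ a 1 ≠ mcx {k, m}ᶜ k 1 := fun h => by
    rw [hgp, hfp] at h; simpa [hak] using congrFun h a
  refine ⟨_, mul_mem (mul_mem (mul_mem hf hg) hf) hg, ?_⟩
  rw [comm_eq_swap_mul_swap (p := 1) (mcx_mcx _ _) (mcx_mcx _ _) hfp' hgp']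
  · exact isThreeCycle_swap_mul_swap_same hgp'.symm hfp'.symm hne
  · intro x
    by_contra! hx
    obtain ⟨h1, h2, h3⟩ := hx
    refine h3 (funext fun j => ?_)
    by_cases hj : j = k ∨ j = m
    · refine key ha h2 j ?_
      rcases hj with rfl | rfl
      · simp [hak.symm, hbk.symm]
      · simp [ham.symm, hbm.symm]
    · exact key hk h1 j (by simpa using hj)

end ThreeCycle

/-! ### Restriction to the nonzero vectors -/

section Restriction

variable {n : ℕ}

/-- The group of permutations of the nonzero vectors whose extension fixing `0` lies in `Gₙ`. -/
def restrictedGroup (n : ℕ) : Subgroup (Perm {x : Fin n → ZMod 2 // x ≠ 0}) :=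
  (gateGroup n).comap ofSubtype

theorem mem_restrictedGroup {τ : Perm {x : Fin n → ZMod 2 // x ≠ 0}} :
    τ ∈ restrictedGroup n ↔ ofSubtype τ ∈ gateGroup n := Iff.rfl

theorem exists_ofSubtype_eq {σ : Perm (Fin n → ZMod 2)} (hσ : σ ∈ gateGroup n) :
    ∃ τ : Perm {x : Fin n → ZMod 2 // x ≠ 0}, ofSubtype τ = σ := by
  have h0 := gateGroup_fix_zero hσ
  refine ⟨σ.subtypePerm fun x => not_congr ?_, ofSubtype_subtypePerm _ ?_⟩
  · conv_lhs => rw [← h0]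
    exact σ.injective.eq_iff
  · rintro x hx rfl
    exact hx h0

theorem isPreprimitive_restrictedGroup (hn : 4 ≤ n) :
    MulAction.IsPreprimitive (restrictedGroup n) {x : Fin n → ZMod 2 // x ≠ 0} := by
  have h01 : (⟨0, by omega⟩ : Fin n) ≠ ⟨1, by omega⟩ := by simp
  refine MulAction.isPreprimitive_of_is_two_pretransitive
    (MulAction.is_two_pretransitive_iff.2 fun {a b c d} hab hcd => ?_)
  obtain ⟨g, hg, hga, hgb⟩ :=
    exists_map_pair h01 a.2 b.2 (fun h => hab (Subtype.ext h))
  obtain ⟨g', hg', hgc, hgd⟩ :=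
    exists_map_pair h01 c.2 d.2 (fun h => hcd (Subtype.ext h))
  have hmem : g'⁻¹ * g ∈ gateGroup n := mul_mem (inv_mem hg') hg
  obtain ⟨τ, hτ⟩ := exists_ofSubtype_eq hmem
  refine ⟨⟨τ, mem_restrictedGroup.2 (hτ ▸ hmem)⟩, Subtype.ext ?_, Subtype.ext ?_⟩
  · change (τ a : Fin n → ZMod 2) = c
    rw [← ofSubtype_apply_coe, hτ, Perm.mul_apply, hga, ← hgc, Perm.inv_eq_iff_eq]
  · change (τ b : Fin n → ZMod 2) = d
    rw [← ofSubtype_apply_coe, hτ, Perm.mul_apply, hgb, ← hgd, Perm.inv_eq_iff_eq]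

theorem restrictedGroup_eq (hn : 4 ≤ n) :
    restrictedGroup n = alternatingGroup {x : Fin n → ZMod 2 // x ≠ 0} := by
  refine le_antisymm (fun τ hτ => ?_) ?_
  · rw [mem_alternatingGroup, ← sign_ofSubtype]
    exact gateGroup_sign hn hτ
  · obtain ⟨σ, hσ, h3⟩ := exists_threeCycle_s2 hn
    obtain ⟨τ, rfl⟩ := exists_ofSubtype_eq hσ
    refine alternatingGroup_le_of_isPreprimitive_of_isThreeCycle_mem
      (isPreprimitive_restrictedGroup hn) (g := τ) ?_ hσ
    rwa [IsThreeCycle, cycleType_ofSubtype] at h3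

end Restriction

/-- For `n ≥ 4`: every element of `Gₙ` fixes the zero vector, and the
restrictions of elements of `Gₙ` to the nonzero vectors are exactly the
alternating group on `F₂ⁿ \ {0}`. -/
theorem gateGroup_restriction_eq_alternating (n : ℕ) (hn : 4 ≤ n) :
    (∀ σ ∈ gateGroup n, σ 0 = 0) ∧
    (∀ τ : Equiv.Perm {x : Fin n → ZMod 2 // x ≠ 0},
      τ ∈ alternatingGroup {x : Fin n → ZMod 2 // x ≠ 0} ↔
        ∃ σ ∈ gateGroup n,
          ∀ x : {x : Fin n → ZMod 2 // x ≠ 0}, σ x.val = (τ x).val) := by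
  refine ⟨fun σ => gateGroup_fix_zero, fun τ => ?_⟩
  rw [← restrictedGroup_eq hn, mem_restrictedGroup]
  constructor
  · exact fun h => ⟨_, h, fun x => ofSubtype_apply_coe τ x⟩
  · rintro ⟨σ, hσ, h⟩
    suffices ofSubtype τ = σ from this ▸ hσ
    refine Equiv.ext fun x => ?_
    by_cases hx : x = 0
    · rw [hx, gateGroup_fix_zero hσ, ofSubtype_apply_of_not_mem τ (by simp)]
    · rw [ofSubtype_apply_of_mem τ hx, ← h ⟨x, hx⟩]
end

section
/- Let n ≥ 1 and let a₁, …, aₙ be nonnegative real numbers. Then the function p(x) = Σ_{i=1}^{n} aᵢ xⁱ (1−x)^{n−i} is monotone nondecreasing on the interval [0, 1/n]. -/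
/-!
A sum of monotone functions with nonnegative weights is monotone, so it suffices to treat one
term `xⁱ (1 - x)ⁿ⁻ⁱ` with `1 ≤ i ≤ n`. Its derivative is `xⁱ⁻¹ (1 - x)ⁿ⁻ⁱ⁻¹ (i - n x)` for `i < n`,
and `n xⁿ⁻¹` for `i = n`; both are nonnegative when `0 ≤ x ≤ 1/n`, since then `n x ≤ 1 ≤ i`.
-/

/-- A single term, with `i = j + 1` and `n - i = m`. -/
lemma monotoneOn_pow_mul_one_sub_pow (j m : ℕ) :
    MonotoneOn (fun x : ℝ => x ^ (j + 1) * (1 - x) ^ m)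
      (Set.Icc (0 : ℝ) (1 / ((j + 1 + m : ℕ) : ℝ))) := by
  have hd : ∀ x : ℝ, HasDerivAt (fun x : ℝ => x ^ (j + 1) * (1 - x) ^ m)
      (((j + 1 : ℕ) : ℝ) * x ^ j * (1 - x) ^ m
        + x ^ (j + 1) * ((m : ℝ) * (1 - x) ^ (m - 1) * (-1))) x := fun x => by
    have h1 := hasDerivAt_pow (j + 1) x
    have h2 := ((hasDerivAt_id' x).const_sub 1).fun_pow m
    exact h1.fun_mul h2
  refine monotoneOn_of_deriv_nonneg (convex_Icc _ _) (by fun_prop)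
    (fun x _ => (hd x).differentiableAt.differentiableWithinAt) fun x hx => ?_
  rw [(hd x).deriv]
  obtain ⟨h0, h1⟩ := interior_subset hx
  have hnx : x * ((j + 1 + m : ℕ) : ℝ) ≤ 1 := (le_div_iff₀ (by positivity)).1 h1
  push_cast at hnx ⊢
  have hj : 0 ≤ (j : ℝ) * x := by positivity
  have hm : 0 ≤ (m : ℝ) * x := by positivity
  have hx1 : 0 ≤ 1 - x := by linarith
  rcases m with _ | k
  · simp only [Nat.cast_zero, zero_mul, mul_zero, add_zero]
    positivity
  · have hf : 0 ≤ (j + 1 : ℝ) - x * (j + 1 + (k + 1 : ℕ)) := by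
      have : (0 : ℝ) ≤ j := by positivity
      linarith
    calc (0 : ℝ) ≤ x ^ j * (1 - x) ^ k * ((j + 1 : ℝ) - x * (j + 1 + (k + 1 : ℕ))) :=
          mul_nonneg (mul_nonneg (pow_nonneg h0 j) (pow_nonneg hx1 k)) hf
      _ = _ := by
          rw [Nat.add_sub_cancel]
          push_cast
          ring

/-- If `a₁, …, aₙ ≥ 0`, then `p(x) = Σ_{i=1}^{n} aᵢ xⁱ (1−x)^{n−i}` is
monotone nondecreasing on `[0, 1/n]`. -/
theorem error_polynomial_monotoneOn (n : ℕ) (hn : 1 ≤ n) (a : ℕ → ℝ)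
    (ha : ∀ i ∈ Finset.Icc 1 n, 0 ≤ a i) :
    MonotoneOn (fun x : ℝ => ∑ i ∈ Finset.Icc 1 n, a i * x ^ i * (1 - x) ^ (n - i))
      (Set.Icc (0 : ℝ) (1 / (n : ℝ))) := by
  intro x hx y hy hxy
  refine Finset.sum_le_sum fun i hi => ?_
  have hai := ha i hi
  obtain ⟨hi1, hin⟩ := Finset.mem_Icc.1 hi
  obtain ⟨j, rfl⟩ := Nat.exists_eq_add_of_le' hi1
  obtain ⟨m, rfl⟩ := Nat.exists_eq_add_of_le hin
  rw [Nat.add_sub_cancel_left, mul_assoc, mul_assoc]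
  exact mul_le_mul_of_nonneg_left (monotoneOn_pow_mul_one_sub_pow j m hx hy hxy) hai
end
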